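/- arXiv:1904.08130 — 3 statements merged into one kernel-verified Lean document; each statement's English description precedes it below -/
import Mathlib

section
/- For all real numbers a, b and every real t with t ≥ a, one has (t² + b²)/(1 + t − a)² ≤ max(a² + b², 1). -/
/-- Bound for the auxiliary function `F(t) = (t² + b²)/(1 + t − a)²` for `t ≥ a`. -/
theorem aux_function_bound (a b t : ℝ) (ht : a ≤ t) :
    (t ^ 2 + b ^ 2) / (1 + t - a) ^ 2 ≤ max (a ^ 2 + b ^ 2) 1 := by
  have h1 : a ^ 2 + b ^ 2 ≤ max (a ^ 2 + b ^ 2) 1 := le_max_left _ _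
  have h2 : 1 ≤ max (a ^ 2 + b ^ 2) 1 := le_max_right _ _
  generalize max (a ^ 2 + b ^ 2) 1 = M at *
  have hs : 0 ≤ t - a := sub_nonneg.2 ht
  have hpos : 0 < (1 + t - a) ^ 2 := pow_pos (by linarith) 2
  have ha : a ≤ M := by nlinarith [sq_nonneg (a - 1), sq_nonneg b]
  rw [div_le_iff₀ hpos]
  -- With `s = t - a`, compare `(a² + b²) + 2as + s²` with `M + 2Ms + Ms²` term by term.
  nlinarith [mul_nonneg (sub_nonneg.2 ha) hs, mul_nonneg (sub_nonneg.2 h2) (sq_nonneg (t - a))]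
end

section
/- Let s ∈ ℂ with Re s > 0, let c > 0 and μ > 0 be real, let ξ ∈ ℝ, and let β ∈ ℂ satisfy β² = ξ² + s²/c² and Re β < 0. Then Re( β/(s μ) ) < 0. -/
/-- Pointwise dissipativity of the DtN symbol: if `Re s > 0`, `c, μ > 0`,
`β² = ξ² + s²/c²` and `Re β < 0`, then `Re(β/(sμ)) < 0`. -/
theorem symbol_dissipative (s : ℂ) (hs : 0 < s.re) (c μ : ℝ) (hc : 0 < c) (hμ : 0 < μ)
    (ξ : ℝ) (β : ℂ) (hβ : β ^ 2 = (ξ : ℂ) ^ 2 + s ^ 2 / (c : ℂ) ^ 2) (hβre : β.re < 0) :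
    (β / (s * (μ : ℂ))).re < 0 := by
  have hc' : (c : ℂ) ≠ 0 := by exact_mod_cast hc.ne'
  have h : β ^ 2 * ((c ^ 2 : ℝ) : ℂ) = ((ξ ^ 2 * c ^ 2 : ℝ) : ℂ) + s ^ 2 := by
    rw [hβ]; push_cast; field_simp
  -- Only the imaginary part of the dispersion relation is needed; `ξ` drops out of it.
  have him : β.re * β.im * c ^ 2 = s.re * s.im := by
    have h2 := congrArg Complex.im h
    rw [Complex.im_mul_ofReal, Complex.add_im, Complex.ofReal_im, sq β, sq s,
      Complex.mul_im, Complex.mul_im] at h2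
    linarith
  -- Multiplying `Re (conj s * β)` by `Re β < 0` turns it into a sum of squares.
  have key : s.re * β.re + s.im * β.im < 0 := by
    by_contra! hn
    have h1 : (s.re * β.re + s.im * β.im) * β.re * c ^ 2
        = s.re * (β.re ^ 2 * c ^ 2 + s.im ^ 2) := by
      linear_combination s.im * him
    have h2 : 0 < s.re * (β.re ^ 2 * c ^ 2 + s.im ^ 2) := by
      have : 0 < β.re ^ 2 := by nlinarith
      positivity
    have h3 : (s.re * β.re + s.im * β.im) * β.re * c ^ 2 ≤ 0 :=
      mul_nonpos_of_nonpos_of_nonneg (mul_nonpos_of_nonneg_of_nonpos hn hβre.le) (sq_nonneg c)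
    linarith
  have hs0 : s ≠ 0 := by
    rintro rfl
    simp at hs
  have hN : 0 < Complex.normSq s := Complex.normSq_pos.mpr hs0
  rw [← div_div, Complex.div_ofReal_re, Complex.div_re, ← add_div]
  exact div_neg_of_neg_of_pos (div_neg_of_neg_of_pos (by linarith) hN) hμ
end

section
/- Let n ∈ ℕ, let s ∈ ℂ with Re s > 0, let c > 0 and μ > 0 be real, and for each ξ ∈ ℝ let β(ξ) be the unique complex number with β(ξ)² = ξ² + s²/c² and Re β(ξ) < 0. Let u₁, …, u_n : ℝ → ℂ be such that for all i, j the function ξ ↦ β(ξ) u_i(ξ) conj(u_j(ξ)) is integrable on ℝ. Then −Re ∑_{j=1}^{n} ∑_{i=1}^{n} ∫_ℝ (s μ)^{-1} β(ξ) u_i(ξ) conj(u_j(ξ)) dξ ≥ 0. -/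
/-!
The double sum of products `u i * conj (u j)` is `normSq (∑ i, u i)` pointwise, a nonnegative real,
so after exchanging the finite sums with the integral the claim reduces to
`Re ((s μ)⁻¹ β) ≤ 0` pointwise (`symbol_re_nonpos`). Writing `β = a + i b` and `s = σ + i τ`, this
sign is that of `a σ + b τ`; the imaginary part of `β² = ξ² + s² / c²` gives `a b = σ τ / c²`, hence
`a (a σ + b τ) = a² σ + σ τ² / c² ≥ 0` while `a < 0`.
-/

open MeasureTheory

theorem symbol_re_nonpos {s b : ℂ} (hs : 0 < s.re) {c μ : ℝ} (hμ : 0 < μ) (ξ : ℝ)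
    (hb : b ^ 2 = (ξ : ℂ) ^ 2 + s ^ 2 / (c : ℂ) ^ 2) (hb' : b.re < 0) :
    ((s * (μ : ℂ))⁻¹ * b).re ≤ 0 := by
  have him : b.re * b.im = s.re * s.im / c ^ 2 := by
    have h := congrArg Complex.im hb
    rw [← Complex.ofReal_pow, ← Complex.ofReal_pow, Complex.add_im, Complex.div_ofReal_im,
      Complex.ofReal_im] at h
    simp only [pow_two, Complex.mul_im] at h ⊢
    linear_combination h / 2
  have hprod : 0 ≤ b.re * (s.re * b.re + s.im * b.im) := by
    have h : b.re * (s.re * b.re + s.im * b.im)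
        = s.re * b.re ^ 2 + s.re * (s.im ^ 2 / c ^ 2) := by
      linear_combination s.im * him
    rw [h]
    positivity
  have hneg : s.re * b.re + s.im * b.im ≤ 0 := nonpos_of_mul_nonneg_right hprod hb'
  have hre : ((s * (μ : ℂ))⁻¹ * b).re
      = (s.re * b.re + s.im * b.im) * (μ⁻¹ * (Complex.normSq s)⁻¹) := by
    rw [mul_inv, ← Complex.ofReal_inv, mul_right_comm, Complex.re_mul_ofReal, Complex.mul_re,
      Complex.inv_re, Complex.inv_im]
    ring
  rw [hre]
  exact mul_nonpos_of_nonpos_of_nonneg hneg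
    (mul_nonneg (inv_nonneg.2 hμ.le) (inv_nonneg.2 (Complex.normSq_nonneg s)))

/-- Coupled dissipativity for the `n`-cavity problem (Lemma 4.1, Fourier side). -/
theorem multi_cavity_dissipative (n : ℕ) (s : ℂ) (hs : 0 < s.re) (c μ : ℝ)
    (hc : 0 < c) (hμ : 0 < μ) (β : ℝ → ℂ)
    (hβ : ∀ ξ : ℝ, (β ξ) ^ 2 = (ξ : ℂ) ^ 2 + s ^ 2 / (c : ℂ) ^ 2 ∧ (β ξ).re < 0)
    (u : Fin n → ℝ → ℂ)
    (hint : ∀ i j : Fin n,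
      Integrable (fun ξ : ℝ => β ξ * (u i ξ * (starRingEnd ℂ) (u j ξ)))) :
    0 ≤ -(∑ j : Fin n, ∑ i : Fin n,
        ∫ ξ : ℝ, (s * (μ : ℂ))⁻¹ * β ξ * (u i ξ * (starRingEnd ℂ) (u j ξ))).re := by
  have hint' : ∀ i j : Fin n, Integrable
      (fun ξ : ℝ => (s * (μ : ℂ))⁻¹ * β ξ * (u i ξ * (starRingEnd ℂ) (u j ξ))) := fun i j => by
    simpa only [mul_assoc] using (hint i j).const_mul (s * (μ : ℂ))⁻¹
  have hsum : ∀ j : Fin n, Integrable (fun ξ : ℝ =>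
      ∑ i : Fin n, (s * (μ : ℂ))⁻¹ * β ξ * (u i ξ * (starRingEnd ℂ) (u j ξ))) :=
    fun j => integrable_finsetSum _ fun i _ => hint' i j
  have hswap : (∑ j : Fin n, ∑ i : Fin n,
        ∫ ξ : ℝ, (s * (μ : ℂ))⁻¹ * β ξ * (u i ξ * (starRingEnd ℂ) (u j ξ)))
      = ∫ ξ : ℝ, ∑ j : Fin n, ∑ i : Fin n,
          (s * (μ : ℂ))⁻¹ * β ξ * (u i ξ * (starRingEnd ℂ) (u j ξ)) := by
    rw [integral_finsetSum _ fun j _ => hsum j]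
    exact Finset.sum_congr rfl fun j _ => (integral_finsetSum _ fun i _ => hint' i j).symm
  have hre := integral_re (integrable_finsetSum Finset.univ fun j _ => hsum j)
  simp only [RCLike.re_eq_complex_re] at hre
  rw [hswap, ← hre, neg_nonneg]
  refine integral_nonpos fun ξ => ?_
  have hsq : (∑ j : Fin n, ∑ i : Fin n,
        (s * (μ : ℂ))⁻¹ * β ξ * (u i ξ * (starRingEnd ℂ) (u j ξ)))
      = (s * (μ : ℂ))⁻¹ * β ξ * (Complex.normSq (∑ i, u i ξ) : ℂ) := by
    simp_rw [← Finset.mul_sum, ← Finset.sum_mul]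
    rw [← Finset.mul_sum, ← map_sum, Complex.mul_conj]
  simp only [hsq, Complex.re_mul_ofReal, Pi.zero_apply]
  exact mul_nonpos_of_nonpos_of_nonneg (symbol_re_nonpos hs hμ ξ (hβ ξ).1 (hβ ξ).2)
    (Complex.normSq_nonneg _)
end
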